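/- Let d ≥ 2 and ℓ, k ≥ 0 be integers, and let f be a spherical harmonic of degree ℓ on S^{d−1} with ∫_{S^{d−1}} |f|² dσ = 1. Then the Zernike basis function ψ(x) = R_{ℓ,k}(‖x‖) f(x/‖x‖) satisfies the uniform bound |ψ(x)| ≤ |C_{ℓ,k}| · √(N_ℓ / σ(S^{d−1})) for every x with 0 < ‖x‖ ≤ 1, where |C_{ℓ,k}| = √(2ℓ+4k+d) · (1/k!) · ∏_{j=1}^{k} (ℓ+k−j+d/2) and N_ℓ is the complex dimension of the space H_ℓ of spherical harmonics of degree ℓ. -/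

import Mathlib

/-!
The bound is the product of a radial and an angular estimate.

*Radial part.* With `b = ℓ + d/2` and `t = r²`, `R_{ℓ,k}(r) = √(2ℓ+4k+d) · r^ℓ · y(t)`, where `y`
is a Jacobi polynomial solving `t(1-t)y'' + (b-(b+1)t)y' + k(k+b)y = 0` (`radialPoly_ode`). The
function `k(k+b)y² + t(1-t)y'²` has derivative `(2bt-(2b-1))y'²`, so on `[0,1]` it is largest at an
endpoint. There `y(1) = 1` (a `k`-th finite difference) and `|y(0)| = ∏_{i<k}(b+i)/k!`, which is at
least `1` because `b ≥ 1`. Hence `|R_{ℓ,k}| ≤ |C_{ℓ,k}|` (`abs_zernikeR_le`).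

*Angular part.* For an `L²`-orthonormal basis `Y_i` of the spherical harmonics of degree `ℓ`, the
function `K(ω) = ∑ |Y_i(ω)|²` is the squared norm of evaluation at `ω`. Orthogonal maps preserve the
space and the surface measure and act transitively, so `K` is constant, and integrating gives
`K = N_ℓ/σ(S^{d-1})` (`norm_sq_mul_le_finrank`). Reflections suffice for transitivity, and the
invariance of harmonic polynomials is the chain rule (`IsHarmonicHomogeneous.comp_orthogonal`).
That `σ(S^{d-1})` is finite, and positive on nonempty open sets, also follows from homogeneity
(`measure_univ_le_nat_mul`) together with `∫ |f|² dσ = 1`.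
-/

open MeasureTheory Finset
open scoped ENNReal

noncomputable section

/-- `d`-dimensional Euclidean space. -/
abbrev Euc (d : ℕ) := EuclideanSpace ℝ (Fin d)

/-- The radial Zernike polynomial `R_{ℓ,k}` in dimension `d`. -/
def zernikeR (d ℓ k : ℕ) (r : ℝ) : ℝ :=
  Real.sqrt (2 * ℓ + 4 * k + d) *
    ∑ s ∈ Finset.range (k + 1),
      (-1 : ℝ) ^ s * (k.choose s : ℝ) * ((k.factorial : ℝ))⁻¹ *
        (∏ j ∈ Finset.Icc 1 k, ((ℓ : ℝ) + 2 * k - s - j + d / 2)) *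
        r ^ (ℓ + 2 * (k - s))

/-- `P` is a harmonic homogeneous polynomial of degree `ℓ` in `d` variables. -/
def IsHarmonicHomogeneous (d ℓ : ℕ) (P : MvPolynomial (Fin d) ℂ) : Prop :=
  P.IsHomogeneous ℓ ∧ (∑ i, MvPolynomial.pderiv i (MvPolynomial.pderiv i P)) = 0

/-- The space `H_ℓ` of spherical harmonics of degree `ℓ`: restrictions to the unit
sphere of harmonic homogeneous polynomials of degree `ℓ`. -/
def sphericalHarmonics (d ℓ : ℕ) :
    Submodule ℂ (Metric.sphere (0 : Euc d) 1 → ℂ) :=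
  Submodule.span ℂ
    {f | ∃ P : MvPolynomial (Fin d) ℂ, IsHarmonicHomogeneous d ℓ P ∧
      ∀ x : Metric.sphere (0 : Euc d) 1,
        f x = MvPolynomial.aeval (fun i => (((x : Euc d) i : ℝ) : ℂ)) P}

/-- `N_ℓ`, the complex dimension of the space `H_ℓ` of spherical harmonics of
degree `ℓ`. -/
def sphericalHarmonicsDim (d ℓ : ℕ) : ℕ := Module.finrank ℂ (sphericalHarmonics d ℓ)

/-! ### The radial factor -/

/-- The coefficient of `t ^ m` in the polynomial `y` for which
`R_{ℓ,k}(r) = √(2ℓ+4k+d) · r ^ ℓ · y(r²)`, where `b = ℓ + d/2`. Up to the sign `(-1) ^ k`, `y` is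
the Jacobi polynomial `binom(k+b-1, k) · ₂F₁(-k, k+b; b; t)`. -/
def radialCoeff (b : ℝ) (k m : ℕ) : ℝ :=
  (-1 : ℝ) ^ (k + m) * (k.choose m : ℝ) * ((k.factorial : ℝ))⁻¹ *
    ∏ i ∈ Finset.range k, (b + m + i)

/-- The polynomial with coefficients `radialCoeff b k`. -/
def radialPoly (b : ℝ) (k : ℕ) : Polynomial ℝ :=
  ∑ m ∈ Finset.range (k + 1), Polynomial.monomial m (radialCoeff b k m)

lemma radialPoly_coeff (b : ℝ) (k m : ℕ) :
    (radialPoly b k).coeff m = radialCoeff b k m := by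
  unfold radialPoly
  rw [Polynomial.finsetSum_coeff]
  simp only [Polynomial.coeff_monomial]
  rw [Finset.sum_ite_eq']
  split_ifs with h
  · rfl
  · have : k < m := by simpa using h
    simp [radialCoeff, Nat.choose_eq_zero_of_lt this]

/-- The hypergeometric two-term recurrence. -/
lemma radialCoeff_succ (b : ℝ) (k m : ℕ) :
    radialCoeff b k (m + 1) * ((m + 1) * (m + b)) =
      radialCoeff b k m * (((m : ℝ) - k) * (m + k + b)) := by
  unfold radialCoeff
  have h1 : (k.choose (m + 1) : ℝ) * (m + 1) = k.choose m * ((k : ℝ) - m) := by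
    rcases le_or_gt m k with h | h
    · have := Nat.choose_succ_right_eq k m
      rw [← Nat.cast_sub h]
      exact_mod_cast this
    · simp [Nat.choose_eq_zero_of_lt h, Nat.choose_eq_zero_of_lt (Nat.lt_succ_of_lt h)]
  have h2 : (∏ i ∈ Finset.range k, (b + (m + 1 : ℕ) + i)) * (m + b) =
      (∏ i ∈ Finset.range k, (b + m + i)) * (m + k + b) := by
    have e1 := Finset.prod_range_succ (fun i : ℕ => b + m + i) k
    have e2 := Finset.prod_range_succ' (fun i : ℕ => b + m + i) k
    have e3 : ∏ i ∈ Finset.range k, (b + (m + 1 : ℕ) + i) =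
        ∏ i ∈ Finset.range k, (b + m + (i + 1 : ℕ)) :=
      Finset.prod_congr rfl fun i _ => by push_cast; ring
    rw [e3]
    rw [e2] at e1
    push_cast at e1 ⊢
    linear_combination e1
  have h3 : (-1 : ℝ) ^ (k + (m + 1)) = - (-1) ^ (k + m) := by rw [← add_assoc, pow_succ]; ring
  rw [h3]
  linear_combination (-(-1 : ℝ) ^ (k + m) * ((k.factorial : ℝ))⁻¹) *
    (h1 * ((∏ i ∈ Finset.range k, (b + (m + 1 : ℕ) + i)) * (m + b)) +
      k.choose m * ((k : ℝ) - m) * h2)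

open Polynomial in
/-- The hypergeometric differential equation
`t (1 - t) y'' + (b - (b + 1) t) y' + k (k + b) y = 0`. -/
lemma radialPoly_ode (b : ℝ) (k : ℕ) :
    X * derivative (derivative (radialPoly b k)) + C b * derivative (radialPoly b k) =
      X ^ 2 * derivative (derivative (radialPoly b k)) +
        C (b + 1) * (X * derivative (radialPoly b k)) - C (k * (k + b)) * radialPoly b k := by
  ext m
  have hr := radialCoeff_succ b k m
  rcases m with _ | _ | m
  · simp [coeff_derivative, radialPoly_coeff, mul_coeff_zero] at hr ⊢
    linear_combination hr
  · simp [-map_add, -map_mul, coeff_derivative, radialPoly_coeff, pow_two, mul_assoc, coeff_X_mul] at hr ⊢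
    linear_combination hr
  · simp [-map_add, -map_mul, coeff_derivative, radialPoly_coeff, pow_two, mul_assoc, coeff_X_mul] at hr ⊢
    linear_combination hr

/-- `y(1) = 1`: this is the `k`-th finite difference of a monic polynomial of degree `k`. -/
lemma radialPoly_eval_one (b : ℝ) (k : ℕ) : (radialPoly b k).eval 1 = 1 := by
  set Q : Polynomial ℝ := ∏ i ∈ Finset.range k, (Polynomial.X + Polynomial.C (b + i)) with hQ
  have hmonic : Q.Monic := Polynomial.monic_prod_of_monic _ _ fun i _ => Polynomial.monic_X_add_C _
  have hdeg : Q.natDegree = k := by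
    rw [hQ, Polynomial.natDegree_prod_of_monic _ _ fun i _ => Polynomial.monic_X_add_C _]
    simp only [Polynomial.natDegree_X_add_C, Finset.sum_const, Finset.card_range, smul_eq_mul,
      mul_one]
  have h := congrFun (Polynomial.fwdDiff_iter_degree_eq_factorial Q) 0
  rw [hdeg, fwdDiff_iter_eq_sum_shift] at h
  simp only [hmonic.leadingCoeff] at h
  have hk : (k.factorial : ℝ) ≠ 0 := by positivity
  have key : ∑ m ∈ Finset.range (k + 1), radialCoeff b k m * k.factorial = k.factorial := by
    refine Eq.trans ?_ (h.trans (by simp))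
    refine Finset.sum_congr rfl fun m hm => ?_
    have hm' : m ≤ k := by simpa [Nat.lt_succ_iff] using hm
    have hs : (-1 : ℝ) ^ (k + m) = (-1) ^ (k - m) := by
      rw [show k + m = (k - m) + 2 * m by omega, pow_add, pow_mul]; simp
    have hev : Q.eval (0 + m • 1 : ℝ) = ∏ i ∈ Finset.range k, (b + m + i) := by
      rw [hQ, Polynomial.eval_prod]
      refine Finset.prod_congr rfl fun i _ => ?_
      simp; ring
    rw [hev]
    simp [radialCoeff, hs]
    field_simp
  rw [← Finset.sum_mul] at key
  simp [radialPoly, Polynomial.eval_finsetSum, Polynomial.eval_monomial]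
  exact mul_right_cancel₀ hk (by rw [key, one_mul])

lemma radialPoly_eval_zero_sq (b : ℝ) (k : ℕ) :
    (radialPoly b k).eval 0 ^ 2 =
      (((k.factorial : ℝ))⁻¹ * ∏ i ∈ Finset.range k, (b + i)) ^ 2 := by
  rw [← Polynomial.coeff_zero_eq_eval_zero, radialPoly_coeff]
  simp [radialCoeff, mul_pow, ← pow_mul, mul_comm k 2]

lemma one_le_radialBound (b : ℝ) (hb : 1 ≤ b) (k : ℕ) :
    1 ≤ ((k.factorial : ℝ))⁻¹ * ∏ i ∈ Finset.range k, (b + i) := by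
  have hk : (0 : ℝ) < k.factorial := by positivity
  rw [inv_mul_eq_div, le_div_iff₀ hk, one_mul, ← Finset.prod_range_add_one_eq_factorial]
  push_cast
  exact Finset.prod_le_prod (fun i _ => by positivity) fun i _ => by linarith

/-- Sonin's argument: `k (k + b) y² + t (1 - t) y'²` has derivative `(2 b t - (2 b - 1)) y'²`, so it
decreases and then increases on `[0, 1]`, and `y²` is bounded by its values at the endpoints. -/
lemma radialPoly_sq_le (b : ℝ) (hb : 1 ≤ b) (k : ℕ) (t : ℝ) (h0 : 0 ≤ t) (h1 : t ≤ 1) :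
    (radialPoly b k).eval t ^ 2 ≤
      (((k.factorial : ℝ))⁻¹ * ∏ i ∈ Finset.range k, (b + i)) ^ 2 := by
  rcases Nat.eq_zero_or_pos k with rfl | hk
  · simp [radialPoly, radialCoeff]
  set y := radialPoly b k with hy
  set lam : ℝ := k * (k + b) with hlam
  have hlampos : 0 < lam := by positivity
  set F : ℝ → ℝ := fun t => lam * y.eval t ^ 2 + t * (1 - t) * y.derivative.eval t ^ 2 with hF
  have hode : ∀ t : ℝ, t * y.derivative.derivative.eval t + b * y.derivative.eval t =
      t ^ 2 * y.derivative.derivative.eval t + (b + 1) * (t * y.derivative.eval t)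
        - lam * y.eval t := by
    intro t
    simpa [← hy, ← hlam] using congrArg (Polynomial.eval t) (radialPoly_ode b k)
  have hder : ∀ t, HasDerivAt F ((2 * b * t - (2 * b - 1)) * y.derivative.eval t ^ 2) t := by
    intro t
    have d1 := ((y.hasDerivAt t).pow 2).const_mul lam
    have d2 := (((hasDerivAt_id t).mul ((hasDerivAt_id t).const_sub 1))).mul
      ((y.derivative.hasDerivAt t).pow 2)
    refine (d1.add d2).congr_deriv ?_
    simp
    linear_combination (2 * y.derivative.eval t) * hode t
  have hcont : Continuous F := by
    rw [hF]; fun_prop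
  set c : ℝ := (2 * b - 1) / (2 * b) with hc
  have hb0 : 0 < 2 * b := by linarith
  have hc0 : 0 ≤ c := div_nonneg (by linarith) hb0.le
  have hc1 : c ≤ 1 := by rw [hc, div_le_one hb0]; linarith
  have hanti : AntitoneOn F (Set.Icc 0 c) := by
    refine antitoneOn_of_deriv_nonpos (convex_Icc _ _) hcont.continuousOn
      (fun x _ => (hder x).differentiableAt.differentiableWithinAt) fun x hx => ?_
    rw [interior_Icc] at hx
    rw [(hder x).deriv]
    have := (lt_div_iff₀ hb0).1 hx.2
    exact mul_nonpos_of_nonpos_of_nonneg (by linarith) (sq_nonneg _)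
  have hmono : MonotoneOn F (Set.Icc c 1) := by
    refine monotoneOn_of_deriv_nonneg (convex_Icc _ _) hcont.continuousOn
      (fun x _ => (hder x).differentiableAt.differentiableWithinAt) fun x hx => ?_
    rw [interior_Icc] at hx
    rw [(hder x).deriv]
    have := (div_lt_iff₀ hb0).1 hx.1
    exact mul_nonneg (by linarith) (sq_nonneg _)
  have hF0 : F 0 = lam * (((k.factorial : ℝ))⁻¹ * ∏ i ∈ Finset.range k, (b + i)) ^ 2 := by
    simp only [hF, hy, radialPoly_eval_zero_sq]; ring
  have hF1 : F 1 ≤ lam * (((k.factorial : ℝ))⁻¹ * ∏ i ∈ Finset.range k, (b + i)) ^ 2 := by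
    simp only [hF, hy, radialPoly_eval_one]
    have := one_le_pow₀ (n := 2) (one_le_radialBound b hb k)
    nlinarith
  have hFt : F t ≤ lam * (((k.factorial : ℝ))⁻¹ * ∏ i ∈ Finset.range k, (b + i)) ^ 2 := by
    rcases le_total t c with h | h
    · rw [← hF0]; exact hanti ⟨le_rfl, hc0⟩ ⟨h0, h⟩ h0
    · exact (hmono ⟨h, h1⟩ ⟨hc1, le_rfl⟩ h1).trans hF1
  have hle : lam * y.eval t ^ 2 ≤ F t := by
    have : 0 ≤ t * (1 - t) * y.derivative.eval t ^ 2 :=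
      mul_nonneg (mul_nonneg h0 (by linarith)) (sq_nonneg _)
    simp only [hF]; linarith
  exact le_of_mul_le_mul_left (hle.trans hFt) hlampos

lemma radialProd_reindex (a : ℝ) (k : ℕ) :
    ∏ j ∈ Finset.Icc 1 k, (a - j) = ∏ i ∈ Finset.range k, (a - k + i) := by
  rw [← Finset.prod_range_reflect, Finset.range_eq_Ico, ← Finset.Ico_add_one_right_eq_Icc,
    ← Finset.prod_Ico_add' (fun j : ℕ => a - (j : ℝ)) 0 k 1]
  refine Finset.prod_congr rfl fun i hi => ?_
  have hi' : i < k := (Finset.mem_Ico.1 hi).2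
  rw [Nat.sub_sub, Nat.cast_sub (by omega)]
  push_cast
  ring

lemma zernikeR_eq (d ℓ k : ℕ) (r : ℝ) :
    zernikeR d ℓ k r = Real.sqrt (2 * ℓ + 4 * k + d) *
      (r ^ ℓ * (radialPoly (ℓ + d / 2) k).eval (r ^ 2)) := by
  unfold zernikeR radialPoly
  congr 1
  rw [Polynomial.eval_finsetSum, Finset.mul_sum,
    ← Finset.sum_range_reflect (fun m => r ^ ℓ * _)]
  refine Finset.sum_congr rfl fun s hs => ?_
  have hs' : s ≤ k := by simpa [Nat.lt_succ_iff] using hs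
  rw [show k + 1 - 1 - s = k - s by omega, Polynomial.eval_monomial, radialCoeff,
    Nat.choose_symm hs']
  have h1 : (-1 : ℝ) ^ (k + (k - s)) = (-1) ^ s := by
    rw [show k + (k - s) = s + 2 * (k - s) by omega, pow_add, pow_mul]; simp
  have h2 : ∏ j ∈ Finset.Icc 1 k, ((ℓ : ℝ) + 2 * k - s - j + d / 2) =
      ∏ i ∈ Finset.range k, ((ℓ : ℝ) + d / 2 + (k - s : ℕ) + i) := by
    have e : ∀ j : ℕ, (ℓ : ℝ) + 2 * k - s - j + d / 2 = (ℓ + 2 * k - s + d / 2) - j :=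
      fun j => by ring
    simp only [e, radialProd_reindex]
    refine Finset.prod_congr rfl fun i _ => ?_
    push_cast [Nat.cast_sub hs']
    ring
  rw [h1, h2, pow_add, pow_mul]
  ring

/-- `|R_{ℓ,k}| ≤ |C_{ℓ,k}|` on `[0, 1]`. -/
lemma abs_zernikeR_le (d ℓ k : ℕ) (hd : 2 ≤ d) (r : ℝ) (h0 : 0 ≤ r) (h1 : r ≤ 1) :
    |zernikeR d ℓ k r| ≤ Real.sqrt (2 * ℓ + 4 * k + d) * ((k.factorial : ℝ))⁻¹ *
            ∏ j ∈ Finset.Icc 1 k, ((ℓ : ℝ) + k - j + d / 2) := by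
  have e : ∀ j : ℕ, (ℓ : ℝ) + k - j + d / 2 = (ℓ + k + d / 2) - j := fun j => by ring
  have e' : (ℓ : ℝ) + k + d / 2 - k = ℓ + d / 2 := by ring
  have hd' : (2 : ℝ) ≤ d := by exact_mod_cast hd
  have hb : 1 ≤ (ℓ : ℝ) + d / 2 := by
    have : (0 : ℝ) ≤ ℓ := by positivity
    linarith
  simp only [e, radialProd_reindex, e']
  rw [zernikeR_eq, abs_mul, abs_of_nonneg (Real.sqrt_nonneg _), mul_assoc]
  refine mul_le_mul_of_nonneg_left ?_ (Real.sqrt_nonneg _)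
  rw [abs_mul, abs_of_nonneg (pow_nonneg h0 ℓ)]
  refine (mul_le_of_le_one_left (abs_nonneg _) (pow_le_one₀ h0 h1)).trans ?_
  refine abs_le_of_sq_le_sq (radialPoly_sq_le _ hb k _ (by positivity) (pow_le_one₀ h0 h1)) ?_
  exact zero_le_one.trans (one_le_radialBound _ hb k)

/-! ### Reproducing kernels of spaces of functions on a homogeneous space -/

/-- Translates of a nonempty open set cover a compact homogeneous space, finitely many suffice, and
they all have the same measure. -/
lemma measure_univ_le_nat_mul {X : Type*} [TopologicalSpace X] [CompactSpace X]
    [MeasurableSpace X] [BorelSpace X] (μ : Measure X)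
    (htrans : ∀ x y : X, ∃ g : X → X, Continuous g ∧ MeasurePreserving g μ μ ∧ g x = y)
    (U : Set X) (hU : IsOpen U) (hne : U.Nonempty) :
    ∃ n : ℕ, μ Set.univ ≤ n * μ U := by
  obtain ⟨u, hu⟩ := hne
  choose g hgc hgm hgu using fun x => htrans x u
  obtain ⟨t, ht⟩ := isCompact_univ.elim_finite_subcover (fun x : X => g x ⁻¹' U)
    (fun x => hU.preimage (hgc x))
    (fun x _ => Set.mem_iUnion.2 ⟨x, by simpa [hgu x] using hu⟩)
  refine ⟨t.card, ?_⟩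
  calc μ Set.univ ≤ μ (⋃ x ∈ t, g x ⁻¹' U) := measure_mono ht
    _ ≤ ∑ x ∈ t, μ (g x ⁻¹' U) := measure_biUnion_finset_le _ _
    _ = ∑ x ∈ t, μ U := Finset.sum_congr rfl fun x _ =>
        (hgm x).measure_preimage hU.measurableSet.nullMeasurableSet
    _ = t.card * μ U := by simp

/-- A finite-dimensional space of continuous functions has an `L²`-orthonormal basis. The
orthonormality is recorded as the identity `∫ ‖∑ c_i Y_i‖² = ∑ ‖c_i‖²`. -/
lemma exists_L2_basis {X : Type*} [TopologicalSpace X] [CompactSpace X]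
    [MeasurableSpace X] [BorelSpace X] (μ : Measure X) [IsFiniteMeasure μ] [μ.IsOpenPosMeasure]
    (V : Submodule ℂ C(X, ℂ)) [FiniteDimensional ℂ V] :
    ∃ Y : Fin (Module.finrank ℂ V) → C(X, ℂ),
      (∀ i, Y i ∈ V) ∧ (∀ f ∈ V, ∃ c : Fin (Module.finrank ℂ V) → ℂ, f = ∑ i, c i • Y i) ∧
      ∀ c : Fin (Module.finrank ℂ V) → ℂ,
        ∫ x, ‖(∑ i, c i • Y i) x‖ ^ 2 ∂μ = ∑ i, ‖c i‖ ^ 2 := by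
  let T : C(X, ℂ) →ₗ[ℂ] Lp ℂ 2 μ := (ContinuousMap.toLp 2 μ ℂ : C(X, ℂ) →L[ℂ] Lp ℂ 2 μ)
  have hT : Function.Injective T := ContinuousMap.toLp_injective μ
  let W := V.map T
  let e : V ≃ₗ[ℂ] W := Submodule.equivMapOfInjective T hT V
  have hfin : FiniteDimensional ℂ W := e.finiteDimensional
  have hrank : Module.finrank ℂ W = Module.finrank ℂ V := e.finrank_eq.symm
  let b : OrthonormalBasis (Fin (Module.finrank ℂ V)) ℂ W :=
    (stdOrthonormalBasis ℂ W).reindex (finCongr hrank)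
  have hTe : ∀ w : W, T (e.symm w : C(X, ℂ)) = w := fun w => by
    have := Submodule.coe_equivMapOfInjective_apply T hT V (e.symm w)
    rw [← this]
    exact congrArg Subtype.val (e.apply_symm_apply w)
  refine ⟨fun i => (e.symm (b i) : C(X, ℂ)), fun i => (e.symm (b i)).2, fun f hf => ?_, fun c => ?_⟩
  · refine ⟨fun i => b.repr (e ⟨f, hf⟩) i, ?_⟩
    have h := congrArg e.symm (b.sum_repr (e ⟨f, hf⟩))
    rw [e.symm_apply_apply, map_sum] at h
    have h' := congrArg (Subtype.val) h
    simpa using h'.symm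
  · set F : C(X, ℂ) := ∑ i, c i • (e.symm (b i) : C(X, ℂ)) with hF
    have h1 : T F = ((∑ i, c i • b i : W) : Lp ℂ 2 μ) := by
      rw [hF, map_sum]
      simp [hTe]
    have h2 : inner ℂ (T F) (T F) = ∫ x, F x * (starRingEnd ℂ) (F x) ∂μ :=
      ContinuousMap.inner_toLp μ F F
    have h3 : inner ℂ (T F) (T F) = ((∑ i, ‖c i‖ ^ 2 : ℝ) : ℂ) := by
      rw [h1, ← Submodule.coe_inner, b.orthonormal.inner_sum]
      push_cast
      exact Finset.sum_congr rfl fun i _ => Complex.conj_mul' _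
    have h4 : ∫ x, F x * (starRingEnd ℂ) (F x) ∂μ = ((∫ x, ‖F x‖ ^ 2 ∂μ : ℝ) : ℂ) := by
      rw [← integral_complex_ofReal]
      refine integral_congr_ae (Filter.Eventually.of_forall fun x => ?_)
      simp [Complex.mul_conj']
    rw [h3, h4] at h2
    exact_mod_cast h2.symm

/-- On a compact homogeneous space, the reproducing kernel of an invariant finite-dimensional space
`V` of continuous functions is constant on the diagonal, hence equal to `dim V / μ(X)`. -/
lemma norm_sq_mul_le_finrank {X : Type*} [TopologicalSpace X] [CompactSpace X]
    [MeasurableSpace X] [BorelSpace X] (μ : Measure X) [IsFiniteMeasure μ] [μ.IsOpenPosMeasure]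
    (V : Submodule ℂ C(X, ℂ)) [FiniteDimensional ℂ V]
    (htrans : ∀ x y : X, ∃ g : C(X, X), MeasurePreserving g μ μ ∧ g x = y ∧
      ∀ f ∈ V, f.comp g ∈ V)
    (f : C(X, ℂ)) (hf : f ∈ V) (x : X) :
    ‖f x‖ ^ 2 * μ.real Set.univ ≤ Module.finrank ℂ V * ∫ x, ‖f x‖ ^ 2 ∂μ := by
  obtain ⟨Y, hYV, hspan, hY⟩ := exists_L2_basis μ V
  set K : X → ℝ := fun x => ∑ i, ‖Y i x‖ ^ 2 with hK
  have hint : ∀ f : C(X, ℂ), Integrable (fun x => ‖f x‖ ^ 2) μ := fun f =>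
    (show Continuous fun x => ‖f x‖ ^ 2 by fun_prop).integrable_of_hasCompactSupport
      (HasCompactSupport.of_compactSpace _)
  have hCS : ∀ f ∈ V, ∀ x, ‖f x‖ ^ 2 ≤ (∫ x, ‖f x‖ ^ 2 ∂μ) * K x := by
    intro f hf x
    obtain ⟨c, rfl⟩ := hspan f hf
    rw [hY c]
    have h1 : ‖(∑ i, c i • Y i) x‖ ≤ ∑ i, ‖c i‖ * ‖Y i x‖ := by
      simp only [ContinuousMap.sum_apply, ContinuousMap.smul_apply, smul_eq_mul]
      exact (norm_sum_le _ _).trans (le_of_eq (by simp))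
    exact (pow_le_pow_left₀ (norm_nonneg _) h1 2).trans (Finset.sum_mul_sq_le_sq_mul_sq _ _ _)
  have hKle : ∀ x y, K x ≤ K y := by
    intro x y
    obtain ⟨g, hg, hgy, hgV⟩ := htrans y x
    -- the kernel function at `x`, which is extremal for evaluation at `x`
    set c : Fin (Module.finrank ℂ V) → ℂ := fun i => (starRingEnd ℂ) (Y i x) with hc
    set F : C(X, ℂ) := ∑ i, c i • Y i with hF
    have hFV : F ∈ V := V.sum_mem fun i _ => V.smul_mem _ (hYV i)
    have hFx : F x = (K x : ℂ) := by
      simp [hF, hc, hK, Complex.conj_mul']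
    have hFn : ∫ z, ‖F z‖ ^ 2 ∂μ = K x := by
      rw [hF, hY]; simp [hc, hK]
    have hFg : ∫ z, ‖(F.comp g) z‖ ^ 2 ∂μ = K x := by
      rw [← hFn]
      have hmap := integral_map (μ := μ) hg.measurable.aemeasurable
        (f := fun z => ‖F z‖ ^ 2) (by rw [hg.map_eq]; exact (hint F).aestronglyMeasurable)
      rw [hg.map_eq] at hmap
      exact hmap.symm
    have h := hCS _ (hgV F hFV) y
    rw [hFg] at h
    simp only [ContinuousMap.comp_apply, hgy, hFx] at h
    have hK0 : 0 ≤ K x := Finset.sum_nonneg fun i _ => sq_nonneg _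
    rw [Complex.norm_real, Real.norm_eq_abs, sq_abs] at h
    rcases hK0.eq_or_lt with h0 | h0
    · rw [← h0]; exact Finset.sum_nonneg fun i _ => sq_nonneg _
    · exact le_of_mul_le_mul_left (by rwa [pow_two] at h) h0
  have hKconst : ∀ y, K y = K x := fun y => le_antisymm (hKle _ _) (hKle _ _)
  have hKint : K x * μ.real Set.univ = Module.finrank ℂ V := by
    have h1 : ∫ y, K y ∂μ = μ.real Set.univ * K x := by
      simp [hKconst]
    have h2 : ∫ y, K y ∂μ = ∑ i, ∫ y, ‖Y i y‖ ^ 2 ∂μ :=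
      integral_finsetSum _ fun i _ => hint (Y i)
    have h3 : ∀ i, ∫ y, ‖Y i y‖ ^ 2 ∂μ = 1 := by
      intro i
      have := hY (Pi.single i 1)
      have e1 : ∑ j, (Pi.single i 1 : Fin (Module.finrank ℂ V) → ℂ) j • Y j = Y i := by
        rw [Finset.sum_eq_single i] <;> simp +contextual
      have e2 : ∑ j, ‖(Pi.single i 1 : Fin (Module.finrank ℂ V) → ℂ) j‖ ^ 2 = 1 := by
        rw [Finset.sum_eq_single i] <;> simp +contextual
      rwa [e1, e2] at this
    rw [mul_comm, ← h1, h2]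
    simp [h3]
  calc ‖f x‖ ^ 2 * μ.real Set.univ ≤ (∫ x, ‖f x‖ ^ 2 ∂μ) * K x * μ.real Set.univ :=
        mul_le_mul_of_nonneg_right (hCS f hf x) measureReal_nonneg
    _ = Module.finrank ℂ V * ∫ x, ‖f x‖ ^ 2 ∂μ := by rw [mul_assoc, hKint, mul_comm]

/-! ### Rotation invariance of spherical harmonics -/

lemma pderiv_aeval_chain {d : ℕ} (g : Fin d → MvPolynomial (Fin d) ℂ) (j : Fin d)
    (P : MvPolynomial (Fin d) ℂ) :
    MvPolynomial.pderiv j (MvPolynomial.aeval g P) =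
      ∑ i, MvPolynomial.aeval g (MvPolynomial.pderiv i P) * MvPolynomial.pderiv j (g i) := by
  induction P using MvPolynomial.induction_on with
  | C a => simp [MvPolynomial.algebraMap_eq]
  | add p q hp hq => simp only [map_add, hp, hq, add_mul, Finset.sum_add_distrib]
  | mul_X p n hp =>
    simp only [map_mul, MvPolynomial.aeval_X, Derivation.leibniz, hp, smul_eq_mul, map_add, add_mul,
      Finset.sum_add_distrib, MvPolynomial.pderiv_X, Finset.mul_sum]
    congr 1
    · rw [Finset.sum_eq_single n]
      · simp
      · intro i _ hi
        simp [hi.symm]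
      · simp
    · exact Finset.sum_congr rfl fun i _ => by ring

/-- Precomposition with an orthogonal linear substitution preserves harmonic homogeneous
polynomials. -/
lemma IsHarmonicHomogeneous.comp_orthogonal {d ℓ : ℕ} {P : MvPolynomial (Fin d) ℂ}
    (hP : IsHarmonicHomogeneous d ℓ P) (M : Fin d → Fin d → ℂ)
    (hM : ∀ i k, ∑ j, M i j * M k j = if i = k then 1 else 0) :
    IsHarmonicHomogeneous d ℓ
      (MvPolynomial.aeval (fun i => ∑ j, MvPolynomial.C (M i j) * MvPolynomial.X j) P) := by
  set g : Fin d → MvPolynomial (Fin d) ℂ :=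
    fun i => ∑ j, MvPolynomial.C (M i j) * MvPolynomial.X j with hg
  refine ⟨?_, ?_⟩
  · have := hP.1.aeval g (n := 1) fun i => MvPolynomial.IsHomogeneous.sum _ _ _ fun j _ => by
      simpa using (MvPolynomial.isHomogeneous_C (Fin d) (M i j)).mul
        (MvPolynomial.isHomogeneous_X ℂ j)
    simpa using this
  · have hder : ∀ i j, MvPolynomial.pderiv j (g i) = MvPolynomial.C (M i j) := by
      intro i j
      simp only [hg, map_sum, MvPolynomial.pderiv_C_mul, MvPolynomial.pderiv_X]
      rw [Finset.sum_eq_single j]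
      · simp
      · intro k _ hk
        simp [hk]
      · simp
    have h2 : ∀ j, MvPolynomial.pderiv j (MvPolynomial.pderiv j (MvPolynomial.aeval g P)) =
        ∑ i, ∑ k, MvPolynomial.aeval g (MvPolynomial.pderiv k (MvPolynomial.pderiv i P)) *
          MvPolynomial.C (M i j * M k j) := by
      intro j
      rw [pderiv_aeval_chain g j P, map_sum]
      refine Finset.sum_congr rfl fun i _ => ?_
      rw [hder, mul_comm, MvPolynomial.pderiv_C_mul, pderiv_aeval_chain,
        Finset.mul_sum]
      refine Finset.sum_congr rfl fun k _ => ?_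
      rw [hder, MvPolynomial.C_mul]
      ring
    simp only [h2]
    rw [Finset.sum_comm]
    have h3 : ∀ i, ∑ j, ∑ k, MvPolynomial.aeval g
          (MvPolynomial.pderiv k (MvPolynomial.pderiv i P)) * MvPolynomial.C (M i j * M k j) =
        MvPolynomial.aeval g (MvPolynomial.pderiv i (MvPolynomial.pderiv i P)) := by
      intro i
      rw [Finset.sum_comm]
      simp only [← Finset.mul_sum, ← map_sum, hM]
      rw [Finset.sum_eq_single i]
      · simp
      · intro k _ hk
        simp [hk.symm]
      · simp
    simp only [h3]
    rw [← map_sum, hP.2, map_zero]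

lemma exists_orthogonal_matrix {d : ℕ} (A : Euc d ≃ₗᵢ[ℝ] Euc d) :
    ∃ M : Fin d → Fin d → ℝ, (∀ i k, ∑ j, M i j * M k j = if i = k then 1 else 0) ∧
      ∀ x : Euc d, ∀ i, A x i = ∑ j, M i j * x j := by
  have hco : ∀ (x : Euc d) i, x i = inner ℝ (EuclideanSpace.single i (1 : ℝ)) x := by
    intro x i
    rw [EuclideanSpace.inner_single_left]
    simp
  have hadj : ∀ x i, A x i = inner ℝ (A.symm (EuclideanSpace.single i (1 : ℝ))) x := by
    intro x i
    rw [hco, ← A.symm.inner_map_map, A.symm_apply_apply]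
  have hsum : ∀ x y : Euc d, inner ℝ x y = ∑ j, x j * y j := by
    intro x y
    simp [PiLp.inner_apply, mul_comm]
  refine ⟨fun i j => A.symm (EuclideanSpace.single i (1 : ℝ)) j, fun i k => ?_, fun x i => ?_⟩
  · rw [← hsum, A.symm.inner_map_map]
    rw [EuclideanSpace.inner_single_left]
    simp
  · rw [hadj, hsum]

/-- Evaluation of complex polynomials at real points of the unit sphere. -/
def sphereEval (d : ℕ) :
    MvPolynomial (Fin d) ℂ →ₗ[ℂ] C(Metric.sphere (0 : Euc d) 1, ℂ) where
  toFun P := ⟨fun x => MvPolynomial.aeval (fun i => (((x : Euc d) i : ℝ) : ℂ)) P, by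
    simp only [MvPolynomial.aeval_def, MvPolynomial.eval₂_eq]
    fun_prop⟩
  map_add' P Q := by ext; simp
  map_smul' c P := by ext; simp

/-- Harmonic homogeneous polynomials of degree `ℓ`, as a subspace of the polynomial ring. -/
def harmonicPolys (d ℓ : ℕ) : Submodule ℂ (MvPolynomial (Fin d) ℂ) where
  carrier := {P | IsHarmonicHomogeneous d ℓ P}
  zero_mem' := ⟨MvPolynomial.isHomogeneous_zero _ _ _, by simp⟩
  add_mem' := fun {P Q} hP hQ => ⟨hP.1.add hQ.1, by
    simp only [map_add, Finset.sum_add_distrib, hP.2, hQ.2, add_zero]⟩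
  smul_mem' := fun c P hP => ⟨(MvPolynomial.homogeneousSubmodule (Fin d) ℂ ℓ).smul_mem c hP.1, by
    have h := congrArg (c • ·) hP.2
    simpa [Finset.smul_sum] using h⟩

instance (d ℓ : ℕ) : FiniteDimensional ℂ (harmonicPolys d ℓ) := by
  have h : FiniteDimensional ℂ (MvPolynomial.homogeneousSubmodule (Fin d) ℂ ℓ) :=
    Module.Finite.iff_fg.2 (MvPolynomial.homogeneousSubmodule_fg (Fin d) ℂ ℓ)
  exact Submodule.finiteDimensional_of_le (S₂ := MvPolynomial.homogeneousSubmodule (Fin d) ℂ ℓ)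
    fun P hP => hP.1

/-- The space of spherical harmonics of degree `ℓ`, as a subspace of `C(S^{d-1}, ℂ)`. -/
def contHarmonics (d ℓ : ℕ) : Submodule ℂ C(Metric.sphere (0 : Euc d) 1, ℂ) :=
  (harmonicPolys d ℓ).map (sphereEval d)

instance (d ℓ : ℕ) : FiniteDimensional ℂ (contHarmonics d ℓ) := by
  unfold contHarmonics; infer_instance

lemma finrank_contHarmonics (d ℓ : ℕ) :
    Module.finrank ℂ (contHarmonics d ℓ) = sphericalHarmonicsDim d ℓ := by
  let J : C(Metric.sphere (0 : Euc d) 1, ℂ) →ₗ[ℂ] (Metric.sphere (0 : Euc d) 1 → ℂ) :=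
    ContinuousMap.coeFnLinearMap ℂ
  have hJ : Function.Injective J := DFunLike.coe_injective
  have h : sphericalHarmonics d ℓ = (contHarmonics d ℓ).map J := by
    unfold sphericalHarmonics
    have : {f : Metric.sphere (0 : Euc d) 1 → ℂ | ∃ P : MvPolynomial (Fin d) ℂ,
        IsHarmonicHomogeneous d ℓ P ∧ ∀ x : Metric.sphere (0 : Euc d) 1,
        f x = MvPolynomial.aeval (fun i => (((x : Euc d) i : ℝ) : ℂ)) P} =
        ((contHarmonics d ℓ).map J : Set (Metric.sphere (0 : Euc d) 1 → ℂ)) := by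
      ext f
      constructor
      · rintro ⟨P, hP, hf⟩
        exact ⟨sphereEval d P, ⟨P, hP, rfl⟩, funext fun x => (hf x).symm⟩
      · rintro ⟨_, ⟨P, hP, rfl⟩, rfl⟩
        exact ⟨P, hP, fun x => rfl⟩
    rw [this, Submodule.span_eq]
  unfold sphericalHarmonicsDim
  rw [h]
  exact (Submodule.equivMapOfInjective J hJ _).finrank_eq

/-- The orthogonal group acts transitively on the sphere (a reflection maps `x` to `y`), preserves the
Hausdorff measure and preserves spherical harmonics. -/
lemma sphere_homogeneous (d ℓ : ℕ) (s : ℝ) (x y : Metric.sphere (0 : Euc d) 1) :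
    ∃ g : C(Metric.sphere (0 : Euc d) 1, Metric.sphere (0 : Euc d) 1),
      MeasurePreserving g (μH[s]) (μH[s]) ∧ g x = y ∧
      ∀ f ∈ contHarmonics d ℓ, f.comp g ∈ contHarmonics d ℓ := by
  have hxy : ‖(x : Euc d)‖ = ‖(y : Euc d)‖ := by simp
  let A : Euc d ≃ₗᵢ[ℝ] Euc d := (Submodule.span ℝ {(x : Euc d) - y})ᗮ.reflection
  have hA : A x = y := Submodule.reflection_sub hxy
  have hAA : ∀ z, A (A z) = z := Submodule.reflection_reflection _
  let r : Metric.sphere (0 : Euc d) 1 → Metric.sphere (0 : Euc d) 1 := fun z => ⟨A z, by simp⟩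
  have hrr : ∀ z, r (r z) = z := fun z => Subtype.ext (hAA z)
  have hiso : Isometry r := fun z w => A.isometry z w
  let e : Metric.sphere (0 : Euc d) 1 ≃ᵢ Metric.sphere (0 : Euc d) 1 :=
    ⟨⟨r, r, hrr, hrr⟩, hiso⟩
  refine ⟨⟨r, hiso.continuous⟩, e.measurePreserving_hausdorffMeasure s, Subtype.ext hA, ?_⟩
  rintro _ ⟨P, hP, rfl⟩
  obtain ⟨M, hM, hMA⟩ := exists_orthogonal_matrix A
  refine ⟨_, IsHarmonicHomogeneous.comp_orthogonal hP (fun i j => (M i j : ℂ)) (fun i k => ?_), ?_⟩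
  · have := congrArg (fun t : ℝ => (t : ℂ)) (hM i k)
    push_cast at this
    rw [this]
    split_ifs <;> simp
  · ext z
    change MvPolynomial.aeval _ (MvPolynomial.aeval _ P) =
      MvPolynomial.aeval (fun i => ((A z i : ℝ) : ℂ)) P
    rw [← AlgHom.comp_apply, MvPolynomial.comp_aeval]
    congr 2
    funext i
    simp [hMA]

/-- Pointwise bound for `L²`-normalized spherical harmonics. -/
lemma norm_sphericalHarmonic_le (d ℓ : ℕ) (hd : 2 ≤ d)
    (P : MvPolynomial (Fin d) ℂ) (hP : IsHarmonicHomogeneous d ℓ P)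
    (f : Euc d → ℂ)
    (hf : ∀ x : Euc d, f x = MvPolynomial.aeval (fun i => ((x i : ℝ) : ℂ)) P)
    (hnorm : (∫ x in Metric.sphere (0 : Euc d) 1, ‖f x‖ ^ 2 ∂μH[(d : ℝ) - 1]) = 1)
    (x : Euc d) (hx : ‖x‖ = 1) :
    ‖f x‖ ≤ Real.sqrt ((sphericalHarmonicsDim d ℓ : ℝ) /
            (μH[(d : ℝ) - 1] (Metric.sphere (0 : Euc d) 1)).toReal) := by
  have hd' : (2 : ℝ) ≤ d := by exact_mod_cast hd
  have hs0 : 0 ≤ (d : ℝ) - 1 := by linarith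
  set s : ℝ := (d : ℝ) - 1
  set μ : Measure (Metric.sphere (0 : Euc d) 1) := μH[s] with hμ
  have hisom : Isometry (Subtype.val : Metric.sphere (0 : Euc d) 1 → Euc d) := isometry_subtype_coe
  have hmap : μ.map Subtype.val = μH[s].restrict (Metric.sphere (0 : Euc d) 1) := by
    rw [hμ, hisom.map_hausdorffMeasure (Or.inl hs0), Subtype.range_coe]
  have huniv : μ Set.univ = μH[s] (Metric.sphere (0 : Euc d) 1) := by
    rw [hμ, ← hisom.hausdorffMeasure_image (Or.inl hs0), Set.image_univ, Subtype.range_coe]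
  set F : C(Metric.sphere (0 : Euc d) 1, ℂ) := sphereEval d P with hF
  have hFf : ∀ z : Metric.sphere (0 : Euc d) 1, F z = f z := fun z => (hf z).symm
  have hnorm' : ∫ z, ‖F z‖ ^ 2 ∂μ = 1 := by
    rw [← hmap, (MeasurableEmbedding.subtype_coe
      Metric.isClosed_sphere.measurableSet).integral_map] at hnorm
    simpa only [hFf] using hnorm
  have hFint : Integrable (fun z => ‖F z‖ ^ 2) μ := by
    by_contra h
    rw [integral_undef h] at hnorm'
    exact zero_ne_one hnorm'
  have htr : ∀ x y : Metric.sphere (0 : Euc d) 1, ∃ g : Metric.sphere (0 : Euc d) 1 → _,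
      Continuous g ∧ MeasurePreserving g μ μ ∧ g x = y := fun x y =>
    let ⟨g, hg, hgx, _⟩ := sphere_homogeneous d ℓ s x y
    ⟨g, g.continuous, hg, hgx⟩
  have hμ0 : μ Set.univ ≠ 0 := by
    intro h
    rw [Measure.measure_univ_eq_zero.1 h, integral_zero_measure] at hnorm'
    exact zero_ne_one hnorm'
  -- Finiteness of the surface measure: `f` is square integrable and bounded below on an open set.
  obtain ⟨z₀, hz₀⟩ : ∃ z, F z ≠ 0 := by
    by_contra! h
    simp [h] at hnorm'
  have hfin : IsFiniteMeasure μ := by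
    set ε : ℝ := ‖F z₀‖ ^ 2 / 2 with hε
    have hεpos : 0 < ‖F z₀‖ ^ 2 := by positivity
    have hopen : IsOpen {z | ε < ‖(‖F z‖ ^ 2 : ℝ)‖} := isOpen_lt (by fun_prop) (by fun_prop)
    obtain ⟨n, hn⟩ := measure_univ_le_nat_mul μ htr _ hopen ⟨z₀, by
      simp only [Set.mem_ofPred_eq, Real.norm_eq_abs, abs_of_pos hεpos]; linarith⟩
    exact ⟨hn.trans_lt (ENNReal.mul_lt_top (by simp)
      (hFint.measure_norm_gt_lt_top (by linarith)))⟩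
  have hpos : μ.IsOpenPosMeasure := ⟨fun U hU hne h0 => by
    obtain ⟨n, hn⟩ := measure_univ_le_nat_mul μ htr U hU hne
    rw [h0, mul_zero] at hn
    exact hμ0 (le_antisymm hn bot_le)⟩
  have key := norm_sq_mul_le_finrank μ (contHarmonics d ℓ) (sphere_homogeneous d ℓ s) F
    ⟨P, hP, rfl⟩ ⟨x, by simpa using hx⟩
  rw [hnorm', finrank_contHarmonics, mul_one, hFf] at key
  have hvol : (0 : ℝ) < μ.real Set.univ := ENNReal.toReal_pos hμ0 (measure_ne_top _ _)
  rw [← huniv]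
  exact Real.le_sqrt_of_sq_le ((le_div_iff₀ hvol).2 key)

/-- For an `L²(S^{d-1},σ)`-normalized spherical harmonic `f` of degree
`ℓ`, the Zernike basis function `ψ(x) = R_{ℓ,k}(‖x‖) f(x/‖x‖)` satisfies the uniform
bound `|ψ(x)| ≤ |C_{ℓ,k}| √(N_ℓ/σ(S^{d-1}))` for `0 < ‖x‖ ≤ 1`. -/
theorem zernike_basis_uniform_bound (d ℓ k : ℕ) (hd : 2 ≤ d)
    (P : MvPolynomial (Fin d) ℂ) (hP : IsHarmonicHomogeneous d ℓ P)
    (f : Euc d → ℂ)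
    (hf : ∀ x : Euc d, f x = MvPolynomial.aeval (fun i => ((x i : ℝ) : ℂ)) P)
    (hnorm : (∫ x in Metric.sphere (0 : Euc d) 1, ‖f x‖ ^ 2 ∂μH[(d : ℝ) - 1]) = 1)
    (ψ : Euc d → ℂ)
    (hψ : ∀ x : Euc d, x ≠ 0 → ψ x = (zernikeR d ℓ k ‖x‖ : ℂ) * f (‖x‖⁻¹ • x)) :
    ∀ x : Euc d, 0 < ‖x‖ → ‖x‖ ≤ 1 →
      ‖ψ x‖ ≤
        (Real.sqrt (2 * ℓ + 4 * k + d) * ((k.factorial : ℝ))⁻¹ *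
            ∏ j ∈ Finset.Icc 1 k, ((ℓ : ℝ) + k - j + d / 2)) *
          Real.sqrt ((sphericalHarmonicsDim d ℓ : ℝ) /
            (μH[(d : ℝ) - 1] (Metric.sphere (0 : Euc d) 1)).toReal) := by
  intro x hx0 hx1
  have hxne : x ≠ 0 := norm_pos_iff.1 hx0
  rw [hψ x hxne, norm_mul, Complex.norm_real, Real.norm_eq_abs]
  have hR := abs_zernikeR_le d ℓ k hd ‖x‖ hx0.le hx1
  refine mul_le_mul hR ?_ (norm_nonneg _) ((abs_nonneg _).trans hR)
  refine norm_sphericalHarmonic_le d ℓ hd P hP f hf hnorm _ ?_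
  rw [norm_smul, norm_inv, norm_norm, inv_mul_cancel₀ hx0.ne']
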